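/- Strong Jordan separation, two-component part: Let f : S¹ → S² be a continuous map whose set of injective points I(f) = {p ∈ S¹ : f⁻¹({f(p)}) = {p}} contains a nonempty open subset U of S¹, and let q ∈ U, p := f(q). Then there are precisely two connected components of S² \ f(S¹) which contain p in their closure. -/

import Mathlib

open Metric Set

noncomputable section

/-- The unit circle in the Euclidean plane. -/
def circleS : Set (EuclideanSpace ℝ (Fin 2)) := Metric.sphere 0 1

/-- The unit sphere in Euclidean 3-space. -/
def sphereS : Set (EuclideanSpace ℝ (Fin 3)) := Metric.sphere 0 1

/-- The set of injective points of `f : S¹ → S²`. -/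
def injPts (f : EuclideanSpace ℝ (Fin 2) → EuclideanSpace ℝ (Fin 3)) :
    Set (EuclideanSpace ℝ (Fin 2)) :=
  {p | p ∈ circleS ∧ ∀ q ∈ circleS, f q = f p → q = p}

/-- `C` is a connected component of the set `A` (with its subspace topology). -/
def IsCompOf (C A : Set (EuclideanSpace ℝ (Fin 3))) : Prop :=
  ∃ x ∈ A, C = connectedComponentIn A x

/-!
Stereographic projection from a point missed by the loop moves the problem to the plane, and
putting that point back does not change which points near `p` share a component. In the plane,
components are detected by continuous logarithms on the image `K` of the loop `g : [0, 1] → ℂ`.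

At most two components (Eilenberg, Borsuk): let `a₀, a₁, a₂ ∉ K` lie in a disc around `p` that
misses the part of the loop where self-intersections occur. A logarithm of `g - aᵢ` along `[0, 1]`
jumps by `2πi nᵢ` between the ends. Some integers `m ≠ 0` satisfy `∑ mᵢ = ∑ mᵢ nᵢ = 0`. Then the
combination of the logarithms with coefficients `mᵢ` takes equal values at parameters with the same
image: the jumps cancel at the ends, and at a self-intersection all three logarithms differ by the
same amount. So `∏ (z - aᵢ) ^ mᵢ` has a logarithm on `K`, which is impossible if the `aᵢ` lie in
three different components.

At least two components (Janiszewski): cut the loop into arcs `A` and `B` with `A ∩ B = {p, v}`. The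
function `(z - v) / (z - p)` has a logarithm off `A` and one off `B`. If all points near `p` off the
loop lay in one component, these would glue to a logarithm on a small circle around `p`, about which
the function has winding number `-1`.
-/

open scoped Topology

/-- `HasLogOn F S` means that the function `F` has a continuous logarithm on the set `S`. Only the
values of `F` on `S` matter, and `F` cannot vanish there. -/
def HasLogOn {X : Type*} [TopologicalSpace X] (F : X → ℂ) (S : Set X) : Prop :=
  ∃ L : X → ℂ, ContinuousOn L S ∧ ∀ x ∈ S, Complex.exp (L x) = F x

section ContinuousLogarithms

variable {X Y : Type*} [TopologicalSpace X] [TopologicalSpace Y]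
  {F G : X → ℂ} {S T U V W : Set X}

theorem HasLogOn.mono (h : HasLogOn F S) (hT : T ⊆ S) : HasLogOn F T :=
  let ⟨L, hL, hexp⟩ := h
  ⟨L, hL.mono hT, fun x hx => hexp x (hT hx)⟩

theorem HasLogOn.congr (h : HasLogOn F S) (hFG : EqOn G F S) : HasLogOn G S :=
  let ⟨L, hL, hexp⟩ := h
  ⟨L, hL, fun x hx => (hexp x hx).trans (hFG hx).symm⟩

theorem HasLogOn.mul (hF : HasLogOn F S) (hG : HasLogOn G S) :
    HasLogOn (fun x => F x * G x) S := by
  obtain ⟨L, hL, hexpL⟩ := hF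
  obtain ⟨M, hM, hexpM⟩ := hG
  exact ⟨fun x => L x + M x, hL.add hM, fun x hx => by
    rw [Complex.exp_add, hexpL x hx, hexpM x hx]⟩

theorem HasLogOn.of_homotopy {H : unitInterval × X → ℂ} (hH : ContinuousOn H (univ ×ˢ S))
    (hne : ∀ t, ∀ x ∈ S, H (t, x) ≠ 0) (h₀ : HasLogOn (fun x => H (0, x)) S) :
    HasLogOn (fun x => H (1, x)) S := by
  classical
  obtain ⟨L, hL, hexp⟩ := h₀
  let H' : C(unitInterval × S, {z : ℂ // z ≠ 0}) :=
    ⟨fun y => ⟨H (y.1, y.2), hne _ _ y.2.2⟩,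
      (hH.comp_continuous (by fun_prop) fun y => ⟨trivial, y.2.2⟩).subtype_mk _⟩
  have hlift := Complex.isCoveringMap_exp.liftHomotopy_lifts H' ⟨S.domRestrict L, hL.domRestrict⟩
    fun x => Subtype.ext (hexp x x.2).symm
  set L' := Complex.isCoveringMap_exp.liftHomotopy H' ⟨S.domRestrict L, hL.domRestrict⟩
    fun x => Subtype.ext (hexp x x.2).symm
  refine ⟨fun x => if hx : x ∈ S then L' (1, ⟨x, hx⟩) else 0, ?_, fun x hx => ?_⟩
  · rw [continuousOn_iff_continuous_domRestrict]
    exact (L'.continuous.comp (.prodMk_right 1)).congr fun x => by simp [x.2]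
  · simp only [dif_pos hx]
    exact congrArg Subtype.val (congrFun hlift (1, ⟨x, hx⟩))

theorem hasLogOn_of_starConvex {E : Type*} [AddCommGroup E] [Module ℝ E] [TopologicalSpace E]
    [IsTopologicalAddGroup E] [ContinuousSMul ℝ E] {F : E → ℂ} {S : Set E} {x₀ : E}
    (hS : StarConvex ℝ x₀ S) (hF : ContinuousOn F S) (hne : ∀ x ∈ S, F x ≠ 0) :
    HasLogOn F S := by
  have hmem : ∀ t : unitInterval, ∀ x ∈ S, x₀ + (t : ℝ) • (x - x₀) ∈ S := fun t x hx =>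
    hS.add_smul_sub_mem hx t.2.1 t.2.2
  have h₀ : HasLogOn (fun x => F (x₀ + ((0 : unitInterval) : ℝ) • (x - x₀))) S :=
    ⟨fun _ => Complex.log (F x₀), continuousOn_const, fun x hx => by
      simpa using Complex.exp_log (by simpa using hne _ (hmem 0 x hx))⟩
  have h₁ := HasLogOn.of_homotopy (H := fun y => F (x₀ + (y.1 : ℝ) • (y.2 - x₀)))
    (hF.comp (by fun_prop) fun y hy => hmem _ _ hy.2) (fun t x hx => hne _ (hmem t x hx)) h₀
  simpa using h₁

theorem hasLogOn_div_compl_of_joinedIn {A : Set ℂ} {p q : ℂ} (h : JoinedIn A p q) :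
    HasLogOn (fun z => (z - q) / (z - p)) Aᶜ := by
  obtain ⟨γ, hγ⟩ := h
  have hne : ∀ t, ∀ z ∈ Aᶜ, z - γ t ≠ 0 := fun t z hz hzero =>
    hz (sub_eq_zero.1 hzero ▸ hγ t)
  have hnep : ∀ z ∈ Aᶜ, z - p ≠ 0 := by simpa using hne 0
  have h₀ : HasLogOn (fun z => (z - γ 0) / (z - p)) Aᶜ :=
    ⟨0, continuousOn_const, fun z hz => by simp [div_self (hnep z hz)]⟩
  have h₁ := HasLogOn.of_homotopy (H := fun y => (y.2 - γ y.1) / (y.2 - p))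
    (ContinuousOn.div (by fun_prop) (by fun_prop) fun y hy => hnep _ hy.2)
    (fun t z hz => div_ne_zero (hne t z hz) (hnep z hz)) h₀
  simpa using h₁

theorem eq_of_isPreconnected_of_exp_eq (hW : IsPreconnected W) {h : X → ℂ} (hh : ContinuousOn h W)
    {c : ℂ} (hc : ∀ x ∈ W, Complex.exp (h x) = c) {x y : X} (hx : x ∈ W) (hy : y ∈ W) :
    h x = h y := by
  have hc₀ : c ≠ 0 := hc x hx ▸ Complex.exp_ne_zero _
  exact hW.constant_of_mapsTo ⟨(Complex.isCoveringMapOn_exp c hc₀).1⟩ hh hc hx hy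

theorem exists_const_of_exp_eq_exp (hW : IsPreconnected W) {L M : X → ℂ} (hL : ContinuousOn L W)
    (hM : ContinuousOn M W) (hexp : ∀ x ∈ W, Complex.exp (L x) = Complex.exp (M x)) :
    ∃ c, Complex.exp c = 1 ∧ ∀ x ∈ W, L x = M x + c := by
  have hone : ∀ x ∈ W, Complex.exp (L x - M x) = 1 := fun x hx => by
    rw [Complex.exp_sub, hexp x hx, div_self (Complex.exp_ne_zero _)]
  rcases W.eq_empty_or_nonempty with rfl | ⟨w, hw⟩
  · exact ⟨0, Complex.exp_zero, by simp⟩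
  · refine ⟨L w - M w, hone w hw, fun x hx => ?_⟩
    have hconst : L x - M x = L w - M w := eq_of_isPreconnected_of_exp_eq hW (hL.sub hM) hone hx hw
    linear_combination hconst

-- The two logarithms differ by a constant on `W`, so a shift makes them agree on `T ∩ (U ∩ V)`.
theorem HasLogOn.inter_union (hFU : HasLogOn F U) (hFV : HasLogOn F V) (hU : IsOpen U)
    (hV : IsOpen V) (hW : IsPreconnected W) (hWUV : W ⊆ U ∩ V) (hT : IsOpen T)
    (hTW : T ∩ (U ∩ V) ⊆ W) : HasLogOn F (T ∩ (U ∪ V)) := by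
  classical
  obtain ⟨L, hL, hexpL⟩ := hFU
  obtain ⟨M, hM, hexpM⟩ := hFV
  obtain ⟨c, hc, hLM⟩ := exists_const_of_exp_eq_exp hW (hL.mono (hWUV.trans inter_subset_left))
    (hM.mono (hWUV.trans inter_subset_right)) fun x hx => by
      rw [hexpL x (hWUV hx).1, hexpM x (hWUV hx).2]
  have hEqM : EqOn (U.piecewise L fun x => M x + c) (fun x => M x + c) (T ∩ V) := fun x hx => by
    by_cases hxU : x ∈ U
    · simp [hxU, hLM x (hTW ⟨hx.1, hxU, hx.2⟩)]
    · simp [hxU]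
  refine ⟨U.piecewise L fun x => M x + c, ?_, ?_⟩
  · rw [inter_union_distrib_left]
    refine ContinuousOn.union_of_isOpen ?_ ?_ (hT.inter hU) (hT.inter hV)
    · exact (hL.mono inter_subset_right).congr fun x hx => piecewise_eq_of_mem _ _ _ hx.2
    · exact ((hM.add continuousOn_const).mono inter_subset_right).congr hEqM
  · rintro x ⟨-, hx⟩
    by_cases hxU : x ∈ U
    · simpa [hxU] using hexpL x hxU
    · have hxV : x ∈ V := hx.resolve_left hxU
      simpa [hxU, Complex.exp_add, hc] using hexpM x hxV

theorem hasLogOn_image [T2Space X] {I : Set Y} (hI : IsCompact I) {g : Y → X}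
    (hg : ContinuousOn g I) {l : Y → ℂ} (hl : ContinuousOn l I)
    (hlg : ∀ s ∈ I, ∀ t ∈ I, g s = g t → l s = l t)
    (hexp : ∀ t ∈ I, Complex.exp (l t) = F (g t)) : HasLogOn F (g '' I) := by
  rcases isEmpty_or_nonempty Y with _ | _
  · exact ⟨0, continuousOn_const, by simp [I.eq_empty_of_isEmpty]⟩
  choose! σ hσI hσ using fun x (hx : x ∈ g '' I) => hx
  have hlσ : ∀ t ∈ I, l (σ (g t)) = l t := fun t ht =>
    hlg _ (hσI _ (mem_image_of_mem g ht)) _ ht (hσ _ (mem_image_of_mem g ht))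
  refine ⟨l ∘ σ, ?_, ?_⟩
  · have := isCompact_iff_compactSpace.1 hI
    let g' : I → g '' I := fun t => ⟨g t, mem_image_of_mem g t.2⟩
    have hg' : Topology.IsQuotientMap g' := .of_surjective_continuous
      (fun ⟨_, t, ht, hx⟩ => ⟨⟨t, ht⟩, Subtype.ext hx⟩) (hg.domRestrict.subtype_mk _)
    rw [continuousOn_iff_continuous_domRestrict, hg'.continuous_iff]
    exact hl.domRestrict.congr fun t => (hlσ t t.2).symm
  · rintro _ ⟨t, ht, rfl⟩
    exact (congrArg Complex.exp (hlσ t ht)).trans (hexp t ht)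

theorem eq_zero_of_hasLogOn_sphere {a : ℂ} {r : ℝ} (hr : 0 < r) {m : ℤ}
    (h : HasLogOn (fun z => (z - a) ^ m) (sphere a r)) : m = 0 := by
  obtain ⟨L, hL, hexp⟩ := h
  let e : ℝ → ℂ := circleMap a r
  have he : ∀ t, e t ∈ sphere a r := fun t => circleMap_mem_sphere a hr.le t
  have hconst := eq_of_isPreconnected_of_exp_eq isPreconnected_univ
    (h := fun t : ℝ => L (e t) - m * (t * Complex.I)) (c := (r : ℂ) ^ m)
    ((hL.comp_continuous (continuous_circleMap a r) he).sub (by fun_prop)).continuousOn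
    (fun t _ => by
      rw [Complex.exp_sub, hexp _ (he t), Complex.exp_int_mul, ← div_zpow]
      simp [e, circleMap])
    (mem_univ 0) (mem_univ (2 * Real.pi))
  have he2π : e (2 * Real.pi) = e 0 := by simpa using (periodic_circleMap a r) 0
  simp only [he2π, Complex.ofReal_zero, Complex.ofReal_mul, Complex.ofReal_ofNat] at hconst
  have hmul : (m : ℂ) * (2 * Real.pi * Complex.I) = 0 := by linear_combination hconst
  exact_mod_cast (mul_eq_zero.1 hmul).resolve_right Complex.two_pi_I_ne_zero

end ContinuousLogarithms

section ComplementComponents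

theorem one_lt_rank_real_complex : 1 < Module.rank ℝ ℂ :=
  Complex.rank_real_complex ▸ Nat.one_lt_ofNat

theorem isPreconnected_dist_preimage {E : Type*} [NormedAddCommGroup E] [NormedSpace ℝ E]
    (hE : 1 < Module.rank ℝ E) (x : E) {I : Set ℝ} (hI : IsPreconnected I) (hpos : I ⊆ Ioi 0) :
    IsPreconnected ((dist · x) ⁻¹' I) := by
  have himage : (dist · x) ⁻¹' I = (fun y : ℝ × E => x + y.1 • y.2) '' (I ×ˢ sphere 0 1) := by
    ext y
    constructor
    · intro hy
      have hxy : dist y x ≠ 0 := (hpos hy).ne'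
      rw [dist_eq_norm] at hxy
      refine ⟨(dist y x, ‖y - x‖⁻¹ • (y - x)), ⟨hy, by simp [norm_smul, hxy]⟩, ?_⟩
      simp [dist_eq_norm, smul_inv_smul₀ hxy]
    · rintro ⟨⟨t, u⟩, ⟨ht, hu⟩, rfl⟩
      have hu₁ : ‖u‖ = 1 := mem_sphere_zero_iff_norm.1 hu
      have habs : |t| = t := abs_of_pos (hpos ht)
      simpa [norm_smul, hu₁, habs] using ht
  rw [himage]
  exact (hI.prod (isPreconnected_sphere hE 0 1)).image _ (by fun_prop)

theorem isBounded_or_isBounded_connectedComponentIn_compl {E : Type*} [NormedAddCommGroup E]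
    [NormedSpace ℝ E] (hE : 1 < Module.rank ℝ E) {K : Set E} (hK : Bornology.IsBounded K) {a b : E}
    (hab : connectedComponentIn Kᶜ a ≠ connectedComponentIn Kᶜ b) :
    Bornology.IsBounded (connectedComponentIn Kᶜ a) ∨
      Bornology.IsBounded (connectedComponentIn Kᶜ b) := by
  obtain ⟨r, hr, hKr⟩ := hK.subset_ball_lt 0 0
  have hsub : (dist · 0) ⁻¹' Ioi r ⊆ Kᶜ := fun z hz hzK =>
    (mem_ball.1 (hKr hzK)).not_gt hz
  have hext := isPreconnected_dist_preimage hE 0 isPreconnected_Ioi (Ioi_subset_Ioi hr.le)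
  have hunbounded : ∀ c, ¬ Bornology.IsBounded (connectedComponentIn Kᶜ c) →
      ∃ z, r < dist z 0 ∧ z ∈ connectedComponentIn Kᶜ c := fun c hc => by
    by_contra! hball
    exact hc (isBounded_closedBall.subset fun z hz => not_lt.1 fun hzr => hball z hzr hz)
  by_contra! hbdd
  obtain ⟨z, hz, hza⟩ := hunbounded a hbdd.1
  obtain ⟨w, hw, hwb⟩ := hunbounded b hbdd.2
  have hwz : w ∈ connectedComponentIn Kᶜ z := hext.subset_connectedComponentIn hz hsub hw
  exact hab (by rw [connectedComponentIn_eq hza, connectedComponentIn_eq hwb,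
    connectedComponentIn_eq hwz])

theorem frontier_connectedComponentIn_compl_subset {X : Type*} [TopologicalSpace X]
    [LocallyConnectedSpace X] {K : Set X} (hK : IsClosed K) (a : X) :
    frontier (connectedComponentIn Kᶜ a) ⊆ K := by
  intro z hz
  by_contra hzK
  obtain ⟨w, hwz, hwa⟩ := mem_closure_iff.1 hz.1 _ (hK.isOpen_compl.connectedComponentIn (x := z))
    (mem_connectedComponentIn hzK)
  have hza : z ∈ connectedComponentIn Kᶜ a := by
    rw [connectedComponentIn_eq hwa, ← connectedComponentIn_eq hwz]
    exact mem_connectedComponentIn hzK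
  exact hz.2 (hK.isOpen_compl.connectedComponentIn.interior_eq.symm ▸ hza)

-- Extending the logarithm from the frontier of `C` by Tietze, `(z - a) ^ m` outside `C` glues with
-- `exp L / R` on `C` to a nonvanishing function on the whole plane, which has a logarithm.
theorem eq_zero_of_hasLogOn_frontier {C : Set ℂ} (hC : IsOpen C) (hCb : Bornology.IsBounded C)
    {a : ℂ} (ha : a ∈ C) {R : ℂ → ℂ} (hR : ContinuousOn R (closure C))
    (hR₀ : ∀ z ∈ closure C, R z ≠ 0) {m : ℤ}
    (hlog : HasLogOn (fun z => (z - a) ^ m * R z) (frontier C)) : m = 0 := by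
  classical
  obtain ⟨L₀, hL₀, hexp⟩ := hlog
  obtain ⟨L, hL⟩ := ContinuousMap.exists_restrict_eq (Y := ℂ) isClosed_frontier
    ⟨(frontier C).domRestrict L₀, hL₀.domRestrict⟩
  have hLL₀ : EqOn L L₀ (frontier C) := fun z hz => DFunLike.congr_fun hL ⟨z, hz⟩
  have hza : ∀ z ∉ C, z - a ≠ 0 := fun z hz hzero => hz (sub_eq_zero.1 hzero ▸ ha)
  let F : ℂ → ℂ := C.piecewise (fun z => Complex.exp (L z) / R z) fun z => (z - a) ^ m
  have hF : Continuous F := by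
    refine continuous_piecewise (fun z hz => ?_) ?_ ?_
    · rw [hLL₀ hz, hexp z hz, mul_div_cancel_right₀ _ (hR₀ z (frontier_subset_closure hz))]
    · exact (L.continuous.cexp.continuousOn).div hR hR₀
    · rw [hC.isClosed_compl.closure_eq]
      exact ContinuousOn.zpow₀ (by fun_prop) m fun z hz => .inl (hza z hz)
  have hF₀ : ∀ z, F z ≠ 0 := fun z => by
    by_cases hz : z ∈ C
    · simpa [F, hz] using hR₀ z (subset_closure hz)
    · simpa only [F, piecewise_eq_of_notMem _ _ _ hz] using zpow_ne_zero m (hza z hz)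
  have hlogF : HasLogOn F univ :=
    hasLogOn_of_starConvex (starConvex_univ 0) hF.continuousOn fun z _ => hF₀ z
  obtain ⟨r, hr, hCr⟩ := hCb.subset_ball_lt 0 a
  refine eq_zero_of_hasLogOn_sphere (a := a) hr ((hlogF.mono (subset_univ _)).congr fun z hz => ?_)
  exact (piecewise_eq_of_notMem C _ (fun z => (z - a) ^ m) fun hzC => (hCr hzC).ne hz).symm

variable {ι : Type*} [Fintype ι] {K : Set ℂ} {a : ι → ℂ} {m : ι → ℤ}

theorem eq_zero_of_hasLogOn_prod_of_isBounded (hK : IsClosed K) (haK : ∀ i, a i ∉ K)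
    (hinj : Function.Injective fun i => connectedComponentIn Kᶜ (a i))
    (hlog : HasLogOn (fun z => ∏ i, (z - a i) ^ m i) K) {i : ι}
    (hb : Bornology.IsBounded (connectedComponentIn Kᶜ (a i))) : m i = 0 := by
  classical
  have hfr := frontier_connectedComponentIn_compl_subset hK (a i)
  have hne : ∀ j ∈ Finset.univ.erase i, ∀ z ∈ closure (connectedComponentIn Kᶜ (a i)),
      z - a j ≠ 0 := fun j hj z hz hzero => by
    rw [sub_eq_zero.1 hzero, closure_eq_self_union_frontier] at hz
    exact hz.elim (fun h => Finset.ne_of_mem_erase hj (hinj (connectedComponentIn_eq h).symm))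
      fun h => haK j (hfr h)
  refine eq_zero_of_hasLogOn_frontier (R := fun z => ∏ j ∈ Finset.univ.erase i, (z - a j) ^ m j)
    hK.isOpen_compl.connectedComponentIn hb (mem_connectedComponentIn (haK i)) ?_ ?_ ?_
  · exact continuousOn_finsetProd _ fun j hj =>
      ContinuousOn.zpow₀ (by fun_prop) _ fun z hz => .inl (hne j hj z hz)
  · exact fun z hz => Finset.prod_ne_zero_iff.2 fun j hj => zpow_ne_zero _ (hne j hj z hz)
  · exact (hlog.mono hfr).congr fun z _ =>
      Finset.mul_prod_erase _ (fun j => (z - a j) ^ m j) (Finset.mem_univ i)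

theorem eq_zero_of_hasLogOn_prod (hK : IsCompact K) (haK : ∀ i, a i ∉ K)
    (hinj : Function.Injective fun i => connectedComponentIn Kᶜ (a i))
    (hlog : HasLogOn (fun z => ∏ i, (z - a i) ^ m i) K) (hsum : ∑ i, m i = 0) : m = 0 := by
  have hbdd : ∀ i, Bornology.IsBounded (connectedComponentIn Kᶜ (a i)) → m i = 0 := fun i =>
    eq_zero_of_hasLogOn_prod_of_isBounded hK.isClosed haK hinj hlog
  by_contra hm
  obtain ⟨i, hi⟩ := Function.ne_iff.1 hm
  have hother : ∀ j, j ≠ i → m j = 0 := fun j hj =>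
    hbdd j ((isBounded_or_isBounded_connectedComponentIn_compl
      one_lt_rank_real_complex hK.isBounded (hinj.ne hj)).resolve_right (mt (hbdd i) hi))
  exact hi ((Fintype.sum_eq_single i hother).symm.trans hsum)

end ComplementComponents

/-- The set `A` has exactly two sides at `p`: every neighbourhood of `p` in `A` meets at least two
connected components of `A`, and some such neighbourhood meets at most two of them. -/
structure IsTwoSidedAt {X : Type*} [TopologicalSpace X] (A : Set X) (p : X) : Prop where
  exists_not_injective : ∃ E ∈ 𝓝[A] p, ∀ a : Fin 3 → X, (∀ i, a i ∈ E) →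
    ¬ Function.Injective fun i => connectedComponentIn A (a i)
  exists_ne : ∀ E ∈ 𝓝[A] p, ∃ a ∈ E, ∃ b ∈ E, connectedComponentIn A a ≠ connectedComponentIn A b

section TwoSided

variable {X Z : Type*} [TopologicalSpace X] [TopologicalSpace Z] {A : Set X} {F : Set Z} {p : X}
  {w : Z} {ψ : Z → X}

theorem IsTwoSidedAt.exists_two_components (h : IsTwoSidedAt A p) :
    ∃ a ∈ A, ∃ b ∈ A, connectedComponentIn A a ≠ connectedComponentIn A b ∧
      p ∈ closure (connectedComponentIn A a) ∧ p ∈ closure (connectedComponentIn A b) ∧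
      ∀ c ∈ A, p ∈ closure (connectedComponentIn A c) →
        connectedComponentIn A c = connectedComponentIn A a ∨
          connectedComponentIn A c = connectedComponentIn A b := by
  obtain ⟨E, hE, hinj⟩ := h.exists_not_injective
  obtain ⟨a, ha, b, hb, hab⟩ := h.exists_ne _ (Filter.inter_mem hE self_mem_nhdsWithin)
  have hE₂ : ∀ c ∈ E, connectedComponentIn A c = connectedComponentIn A a ∨
      connectedComponentIn A c = connectedComponentIn A b := fun c hc => by
    by_contra! hcab
    refine hinj ![a, b, c] (by simp [Fin.forall_fin_succ, ha.1, hb.1, hc]) ?_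
    simp [Function.Injective, Fin.forall_fin_succ, hab, hab.symm, hcab.1, hcab.2, hcab.1.symm,
      hcab.2.symm]
  have hadherent : ∀ N ∈ 𝓝 p, ∃ c ∈ N ∩ A, ∃ d ∈ N ∩ A,
      connectedComponentIn A c = connectedComponentIn A a ∧
        connectedComponentIn A d = connectedComponentIn A b := fun N hN => by
    obtain ⟨c, hc, d, hd, hcd⟩ := h.exists_ne _ (Filter.inter_mem hE
      (Filter.inter_mem (mem_nhdsWithin_of_mem_nhds hN) self_mem_nhdsWithin))
    rcases hE₂ c hc.1 with hca | hcb <;> rcases hE₂ d hd.1 with hda | hdb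
    · exact absurd (hca.trans hda.symm) hcd
    · exact ⟨c, hc.2, d, hd.2, hca, hdb⟩
    · exact ⟨d, hd.2, c, hc.2, hda, hcb⟩
    · exact absurd (hcb.trans hdb.symm) hcd
  refine ⟨a, ha.2, b, hb.2, hab, mem_closure_iff_nhds.2 fun N hN => ?_,
    mem_closure_iff_nhds.2 fun N hN => ?_, fun c _ hpc => ?_⟩
  · obtain ⟨c, hc, -, -, hca, -⟩ := hadherent N hN
    exact ⟨c, hc.1, hca ▸ mem_connectedComponentIn hc.2⟩
  · obtain ⟨-, -, d, hd, -, hdb⟩ := hadherent N hN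
    exact ⟨d, hd.1, hdb ▸ mem_connectedComponentIn hd.2⟩
  · obtain ⟨N, hN, hNE⟩ := mem_nhdsWithin_iff_exists_mem_nhds_inter.1 hE
    obtain ⟨x, hxN, hxc⟩ := mem_closure_iff_nhds.1 hpc N hN
    rw [connectedComponentIn_eq hxc]
    exact hE₂ x (hNE ⟨hxN, connectedComponentIn_subset A c hxc⟩)

theorem isTwoSidedAt_iff_of_map (hmap : Filter.map ψ (𝓝[F] w) = 𝓝[A] p) {G : Set Z}
    (hG : G ∈ 𝓝[F] w) (hcomp : ∀ x ∈ G, ∀ y ∈ G,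
      (connectedComponentIn A (ψ x) = connectedComponentIn A (ψ y) ↔
        connectedComponentIn F x = connectedComponentIn F y)) :
    IsTwoSidedAt A p ↔ IsTwoSidedAt F w := by
  have hpre : ∀ E ∈ 𝓝[A] p, ψ ⁻¹' E ∩ G ∈ 𝓝[F] w := fun E hE =>
    Filter.inter_mem (Filter.mem_map.1 (hmap ▸ hE)) hG
  have himage : ∀ E ∈ 𝓝[F] w, ψ '' (E ∩ G) ∈ 𝓝[A] p := fun E hE =>
    hmap ▸ Filter.image_mem_map (Filter.inter_mem hE hG)
  refine ⟨fun ⟨⟨E, hE, hinj⟩, hne⟩ => ⟨⟨_, hpre E hE, fun a ha hinja => ?_⟩, fun E hE => ?_⟩,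
    fun ⟨⟨E, hE, hinj⟩, hne⟩ => ⟨⟨_, himage E hE, fun a ha hinja => ?_⟩, fun E hE => ?_⟩⟩
  · exact hinj (ψ ∘ a) (fun i => (ha i).1) fun i j hij =>
      hinja ((hcomp _ (ha i).2 _ (ha j).2).1 hij)
  · obtain ⟨_, ⟨a, ha, rfl⟩, _, ⟨b, hb, rfl⟩, hab⟩ := hne _ (himage E hE)
    exact ⟨a, ha.1, b, hb.1, mt (hcomp a ha.2 b hb.2).2 hab⟩
  · choose b hb hba using ha
    obtain rfl : ψ ∘ b = a := funext hba
    exact hinj b (fun i => (hb i).1) fun i j hij => hinja ((hcomp _ (hb i).2 _ (hb j).2).2 hij)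
  · obtain ⟨a, ha, b, hb, hab⟩ := hne _ (hpre E hE)
    exact ⟨ψ a, ha.1, ψ b, hb.1, mt (hcomp a ha.2 b hb.2).1 hab⟩

theorem image_connectedComponentIn_of_isEmbedding (hψ : Topology.IsEmbedding ψ) {x : Z}
    (hx : x ∈ F) : ψ '' connectedComponentIn F x = connectedComponentIn (ψ '' F) (ψ x) := by
  refine (hψ.continuous.continuousOn.image_connectedComponentIn_subset hx).antisymm ?_
  have hsub := connectedComponentIn_subset (ψ '' F) (ψ x)
  have himage : ψ '' (ψ ⁻¹' connectedComponentIn (ψ '' F) (ψ x)) =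
      connectedComponentIn (ψ '' F) (ψ x) :=
    image_preimage_eq_of_subset (hsub.trans (image_subset_range ψ F))
  have hpre : IsPreconnected (ψ ⁻¹' connectedComponentIn (ψ '' F) (ψ x)) := by
    rw [← hψ.isInducing.isPreconnected_image, himage]
    exact isPreconnected_connectedComponentIn
  rw [← himage]
  refine image_mono (hpre.subset_connectedComponentIn
    (mem_connectedComponentIn (mem_image_of_mem ψ hx)) ?_)
  exact (preimage_mono hsub).trans (preimage_image_eq F hψ.injective).subset

theorem isTwoSidedAt_image_iff (hψ : Topology.IsEmbedding ψ) :
    IsTwoSidedAt (ψ '' F) (ψ w) ↔ IsTwoSidedAt F w :=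
  isTwoSidedAt_iff_of_map (hψ.map_nhdsWithin_eq F w) self_mem_nhdsWithin fun x hx y hy => by
    rw [← image_connectedComponentIn_of_isEmbedding hψ hx,
      ← image_connectedComponentIn_of_isEmbedding hψ hy, hψ.injective.image_injective.eq_iff]

variable {E : Type*} [NormedAddCommGroup E] [NormedSpace ℝ E] {V : Set E}

theorem isPreconnected_sdiff_singleton (hE : 1 < Module.rank ℝ E) (hV : IsOpen V)
    (hVc : IsPreconnected V) (x : E) : IsPreconnected (V \ {x}) := by
  by_cases hx : x ∈ V
  swap
  · rwa [sdiff_singleton_eq_self hx]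
  refine isPreconnected_of_forall_constant fun f hf y hy z hz => ?_
  obtain ⟨r, hr, hball⟩ := Metric.isOpen_iff.1 hV x hx
  obtain ⟨c, hc⟩ : ∃ c, ∀ y ∈ ball x r \ {x}, f y = c := by
    have hpunctured : ball x r \ {x} = (dist · x) ⁻¹' Ioo 0 r := by
      ext y
      simp [dist_pos, and_comm]
    have hpre : IsPreconnected (ball x r \ {x}) :=
      hpunctured ▸ isPreconnected_dist_preimage hE x isPreconnected_Ioo Ioo_subset_Ioi_self
    rcases (ball x r \ {x}).eq_empty_or_nonempty with hempty | ⟨u, hu⟩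
    · simp [hempty]
    · exact ⟨f u, fun y hy => hpre.constant (hf.mono (sdiff_subset_sdiff_left hball)) hy hu⟩
  classical
  have hupdate : ContinuousOn (Function.update f x c) V := by
    rw [← union_eq_self_of_subset_right hball, ← sdiff_union_of_subset (singleton_subset_iff.2 hx),
      union_assoc, union_eq_self_of_subset_left (singleton_subset_iff.2 (mem_ball_self hr))]
    refine ContinuousOn.union_of_isOpen ?_ ?_ (hV.sdiff isClosed_singleton) isOpen_ball
    · exact hf.congr fun y hy => Function.update_of_ne hy.2 c f
    · refine continuousOn_const (c := c) |>.congr fun y hy => ?_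
      rcases eq_or_ne y x with rfl | hyx
      · exact Function.update_self y c f
      · rw [Function.update_of_ne hyx, hc y ⟨hy, hyx⟩]
  simpa [Function.update_of_ne hy.2, Function.update_of_ne hz.2] using
    hVc.constant hupdate hy.1 hz.1

theorem connectedComponentIn_sdiff_singleton (hE : 1 < Module.rank ℝ E) (hV : IsOpen V) {a z : E}
    (ha : a ∈ V \ {z}) : connectedComponentIn (V \ {z}) a = connectedComponentIn V a \ {z} := by
  refine subset_antisymm (fun x hx => ?_) ?_
  · exact ⟨connectedComponentIn_mono a sdiff_subset hx, (connectedComponentIn_subset _ _ hx).2⟩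
  · exact (isPreconnected_sdiff_singleton hE hV.connectedComponentIn
      isPreconnected_connectedComponentIn z).subset_connectedComponentIn
      ⟨mem_connectedComponentIn ha.1, ha.2⟩
      (sdiff_subset_sdiff_left (connectedComponentIn_subset V a))

theorem isTwoSidedAt_sdiff_singleton_iff (hE : 1 < Module.rank ℝ E) (hV : IsOpen V) {w z : E}
    (hwz : w ≠ z) : IsTwoSidedAt (V \ {z}) w ↔ IsTwoSidedAt V w := by
  have hnhds : {z}ᶜ ∈ 𝓝 w := isOpen_ne.mem_nhds hwz
  refine isTwoSidedAt_iff_of_map (ψ := id) (G := V \ {z}) ?_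
    (Filter.inter_mem self_mem_nhdsWithin (mem_nhdsWithin_of_mem_nhds hnhds)) fun x hx y hy => ?_
  · rw [Filter.map_id, sdiff_eq, inter_comm,
      nhdsWithin_inter_of_mem (mem_nhdsWithin_of_mem_nhds hnhds)]
  · simp only [id]
    refine ⟨fun hxy => ?_, fun hxy => ?_⟩
    · refine connectedComponentIn_eq
        (connectedComponentIn_mono x (sdiff_subset : V \ {z} ⊆ V) ?_)
      exact hxy ▸ mem_connectedComponentIn hy
    · rw [connectedComponentIn_sdiff_singleton hE hV hx,
        connectedComponentIn_sdiff_singleton hE hV hy, hxy]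

end TwoSided

/-- A loop `g : [0, 1] → X` based at `g 0 = g 1` whose only coincidences, besides the one at the
base point, are between parameters in the middle interval `[δ, 1 - δ]`. Values of `g` outside
`[0, 1]` are irrelevant. -/
structure IsLoopInjectiveNearBase {X : Type*} [TopologicalSpace X] (g : ℝ → X) (δ : ℝ) : Prop where
  continuousOn : ContinuousOn g (Icc 0 1)
  map_zero_eq_map_one : g 0 = g 1
  pos : 0 < δ
  lt_half : δ < 1 / 2
  eq_or_mem_of_map_eq : ∀ s ∈ Icc (0 : ℝ) 1, ∀ t ∈ Icc (0 : ℝ) 1, g s = g t →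
    s = t ∨ (s ∈ ({0, 1} : Set ℝ) ∧ t ∈ ({0, 1} : Set ℝ)) ∨
      (s ∈ Icc δ (1 - δ) ∧ t ∈ Icc δ (1 - δ))

namespace IsLoopInjectiveNearBase

variable {X Z : Type*} [TopologicalSpace X] [TopologicalSpace Z] {g : ℝ → X} {δ s t τ : ℝ}

theorem map_ne (hg : IsLoopInjectiveNearBase g δ) (hs : s ∈ Ico 0 δ) (ht : t ∈ Ioo 0 1)
    (hst : s ≠ t) : g s ≠ g t := fun h => by
  have hδ := hg.lt_half
  rcases hg.eq_or_mem_of_map_eq s ⟨hs.1, by linarith [hs.2]⟩ t (Ioo_subset_Icc_self ht) h with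
    h | ⟨-, h | h⟩ | ⟨h, -⟩
  · exact hst h
  · exact ht.1.ne' h
  · exact ht.2.ne h
  · exact h.1.not_gt hs.2

theorem image_inter_image_subset (hg : IsLoopInjectiveNearBase g δ) (hτ : τ ∈ Ioo 0 δ) :
    g '' Icc 0 τ ∩ g '' Icc τ 1 ⊆ {g 0, g τ} := by
  rintro _ ⟨⟨s, hs, rfl⟩, ⟨t, ht, hts⟩⟩
  rcases ht.2.eq_or_lt with rfl | ht₁
  · exact .inl (hts.symm.trans hg.map_zero_eq_map_one.symm)
  · have hst : s = t := by
      by_contra hst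
      exact hg.map_ne ⟨hs.1, hs.2.trans_lt hτ.2⟩ ⟨hτ.1.trans_le ht.1, ht₁⟩ hst hts.symm
    exact .inr (congrArg g (hs.2.antisymm (hst ▸ ht.1)))

theorem of_comp_isEmbedding {ψ : Z → X} (hψ : Topology.IsEmbedding ψ) {γ : ℝ → Z}
    (hg : IsLoopInjectiveNearBase g δ) (hγ : ∀ t ∈ Icc (0 : ℝ) 1, ψ (γ t) = g t) :
    IsLoopInjectiveNearBase γ δ where
  continuousOn := hψ.continuousOn_iff.2 (hg.continuousOn.congr hγ)
  map_zero_eq_map_one := hψ.injective <| by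
    rw [hγ 0 (by simp), hγ 1 (by simp), hg.map_zero_eq_map_one]
  pos := hg.pos
  lt_half := hg.lt_half
  eq_or_mem_of_map_eq s hs t ht h := hg.eq_or_mem_of_map_eq s hs t ht <| by
    rw [← hγ s hs, ← hγ t ht, h]

end IsLoopInjectiveNearBase

section PlaneLoops

theorem sub_eq_sub_of_joinedIn {Y : Type*} [TopologicalSpace Y] {I : Set Y} {g : Y → ℂ} {D : Set ℂ}
    {a b : ℂ} (hI : IsPreconnected I) (hg : ContinuousOn g I) (hgD : MapsTo g I Dᶜ)
    (hab : JoinedIn D a b) {la lb : Y → ℂ} (hla : ContinuousOn la I) (hlb : ContinuousOn lb I)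
    (hexpa : ∀ t ∈ I, Complex.exp (la t) = g t - a)
    (hexpb : ∀ t ∈ I, Complex.exp (lb t) = g t - b) {s t : Y} (hs : s ∈ I) (ht : t ∈ I)
    (hst : g s = g t) : la s - la t = lb s - lb t := by
  obtain ⟨L, hL, hexpL⟩ := hasLogOn_div_compl_of_joinedIn hab
  obtain ⟨c, -, hc⟩ := exists_const_of_exp_eq_exp hI (hlb.sub hla) (hL.comp hg hgD) fun t ht => by
    rw [Pi.sub_apply, Complex.exp_sub, hexpa t ht, hexpb t ht]
    exact (hexpL _ (hgD ht)).symm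
  have hs' := hc s hs
  have ht' := hc t ht
  simp only [Pi.sub_apply, Function.comp_apply, hst] at hs' ht'
  linear_combination ht' - hs'

theorem exists_int_ne_zero_sum_eq_zero (n : Fin 3 → ℤ) :
    ∃ m : Fin 3 → ℤ, m ≠ 0 ∧ ∑ i, m i = 0 ∧ ∑ i, m i * n i = 0 := by
  by_cases h : ![n 1 - n 2, n 2 - n 0, n 0 - n 1] = 0
  · have h₀ : n 0 = n 1 := sub_eq_zero.1 (congrFun h 2)
    exact ⟨![1, -1, 0], fun h => one_ne_zero (congrFun h 0), by simp [Fin.sum_univ_three],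
      by simp [Fin.sum_univ_three, h₀]⟩
  · exact ⟨_, h, by simp [Fin.sum_univ_three], by simp [Fin.sum_univ_three]; ring⟩

variable {g : ℝ → ℂ} {δ : ℝ}

theorem IsLoopInjectiveNearBase.hasLogOn_prod (hg : IsLoopInjectiveNearBase g δ) {ι : Type*}
    [Fintype ι] {D : Set ℂ} (hD : IsPathConnected D) (hgD : MapsTo g (Icc δ (1 - δ)) Dᶜ)
    {a : ι → ℂ} (haD : ∀ i, a i ∈ D) {l : ι → ℝ → ℂ} (hl : ∀ i, ContinuousOn (l i) (Icc 0 1))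
    (hexp : ∀ i, ∀ t ∈ Icc (0 : ℝ) 1, Complex.exp (l i t) = g t - a i) {n m : ι → ℤ}
    (hn : ∀ i, l i 1 = l i 0 + n i * (2 * Real.pi * Complex.I)) (hm : ∑ i, m i = 0)
    (hmn : ∑ i, m i * n i = 0) :
    HasLogOn (fun z => ∏ i, (z - a i) ^ m i) (g '' Icc 0 1) := by
  have hmid : Icc δ (1 - δ) ⊆ Icc 0 1 := Icc_subset_Icc hg.pos.le (by linarith [hg.pos])
  have hends : ∑ i, m i * l i 1 = ∑ i, m i * l i 0 := by
    have hmn' : ∑ i, (m i : ℂ) * n i = 0 := by exact_mod_cast hmn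
    simp only [hn, mul_add, Finset.sum_add_distrib, ← mul_assoc, ← Finset.sum_mul, hmn', zero_mul,
      add_zero]
  refine hasLogOn_image isCompact_Icc hg.continuousOn (l := fun t => ∑ i, m i * l i t)
    (continuousOn_finsetSum _ fun i _ => continuousOn_const.mul (hl i)) ?_ ?_
  · intro s hs t ht hst
    rcases hg.eq_or_mem_of_map_eq s hs t ht hst with
      rfl | ⟨rfl | rfl, rfl | rfl⟩ | ⟨hs', ht'⟩
    · rfl
    · rfl
    · exact hends.symm
    · exact hends
    · rfl
    · have hdiff : ∀ i j, l i s - l i t = l j s - l j t := fun i j =>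
        sub_eq_sub_of_joinedIn isPreconnected_Icc (hg.continuousOn.mono hmid) hgD
          (hD.joinedIn _ (haD i) _ (haD j)) ((hl i).mono hmid) ((hl j).mono hmid)
          (fun t ht => hexp i t (hmid ht)) (fun t ht => hexp j t (hmid ht)) hs' ht' hst
      rcases isEmpty_or_nonempty ι with _ | ⟨⟨j⟩⟩
      · simp
      · rw [← sub_eq_zero, ← Finset.sum_sub_distrib]
        simp only [← mul_sub, hdiff _ j, ← Finset.sum_mul]
        rw [← Int.cast_sum, hm, Int.cast_zero, zero_mul]
  · intro t ht
    simp only [Complex.exp_sum, Complex.exp_int_mul, hexp _ t ht]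

theorem IsLoopInjectiveNearBase.not_injective_connectedComponentIn
    (hg : IsLoopInjectiveNearBase g δ) {D : Set ℂ} (hD : IsPathConnected D)
    (hgD : MapsTo g (Icc δ (1 - δ)) Dᶜ) {a : Fin 3 → ℂ} (haD : ∀ i, a i ∈ D)
    (haK : ∀ i, a i ∉ g '' Icc 0 1) :
    ¬ Function.Injective fun i => connectedComponentIn (g '' Icc 0 1)ᶜ (a i) := fun hinj => by
  choose l hl hexp using fun i => hasLogOn_of_starConvex (F := fun t => g t - a i)
    ((convex_Icc (0 : ℝ) 1).starConvex (left_mem_Icc.2 zero_le_one))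
    (hg.continuousOn.sub continuousOn_const) fun t ht => sub_ne_zero.2 fun h => haK i ⟨t, ht, h⟩
  choose n hn using fun i => Complex.exp_eq_exp_iff_exists_int.1 <|
    show Complex.exp (l i 1) = Complex.exp (l i 0) by
      simp only [hexp i 1 (by simp), hexp i 0 (by simp), hg.map_zero_eq_map_one]
  obtain ⟨m, hm₀, hm, hmn⟩ := exists_int_ne_zero_sum_eq_zero n
  exact hm₀ (eq_zero_of_hasLogOn_prod (isCompact_Icc.image_of_continuousOn hg.continuousOn) haK
    hinj (hg.hasLogOn_prod hD hgD haD hl hexp hn hm hmn) hm)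

theorem not_sdiff_union_subset_of_isPreconnected {A B W E : Set ℂ} {p v : ℂ} (hA : IsClosed A)
    (hB : IsClosed B) (hAB : A ∩ B ⊆ {p, v}) (hpv : p ≠ v) (hpvA : JoinedIn A p v)
    (hpvB : JoinedIn B p v) (hE : E ∈ 𝓝 p) (hW : IsPreconnected W) (hWAB : W ⊆ (A ∪ B)ᶜ) :
    ¬ E \ (A ∪ B) ⊆ W := fun hEW => by
  rw [compl_union] at hWAB
  have hlog : HasLogOn (fun z => (z - v) / (z - p)) (interior E ∩ (Aᶜ ∪ Bᶜ)) :=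
    (hasLogOn_div_compl_of_joinedIn hpvA).inter_union (hasLogOn_div_compl_of_joinedIn hpvB)
      hA.isOpen_compl hB.isOpen_compl hW hWAB isOpen_interior fun z hz =>
        hEW ⟨interior_subset hz.1, fun hzAB => hzAB.elim hz.2.1 hz.2.2⟩
  obtain ⟨r, hr, hball⟩ := nhds_basis_closedBall.mem_iff.1
    (Filter.inter_mem (interior_mem_nhds.2 hE) (isOpen_ne.mem_nhds hpv))
  have hv : ∀ z ∈ closedBall p r, z - v ≠ 0 := fun z hz => sub_ne_zero.2 (hball hz).2
  have hloginv : HasLogOn (fun z => (z - v)⁻¹) (closedBall p r) :=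
    hasLogOn_of_starConvex ((convex_closedBall p r).starConvex (mem_closedBall_self hr.le))
      (ContinuousOn.inv₀ (by fun_prop) hv) fun z hz => inv_ne_zero (hv z hz)
  have hsphere : sphere p r ⊆ interior E ∩ (Aᶜ ∪ Bᶜ) := fun z hz => by
    refine ⟨(hball (sphere_subset_closedBall hz)).1, ?_⟩
    rw [← compl_inter]
    exact fun hzAB => (hAB hzAB).elim (ne_of_mem_sphere hz hr.ne')
      (hball (sphere_subset_closedBall hz)).2
  have hprod := ((hlog.mono hsphere).mul (hloginv.mono sphere_subset_closedBall)).congr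
    (G := fun z => (z - p) ^ (-1 : ℤ)) fun z hz => by
      have := hv z (sphere_subset_closedBall hz)
      simp only [zpow_neg_one, div_mul_eq_mul_div, mul_inv_cancel₀ this, one_div]
  exact absurd (eq_zero_of_hasLogOn_sphere hr hprod) (by decide)

theorem IsLoopInjectiveNearBase.exists_connectedComponentIn_ne (hg : IsLoopInjectiveNearBase g δ)
    {E : Set ℂ} (hE : E ∈ 𝓝 (g 0)) : ∃ a ∈ E ∩ (g '' Icc 0 1)ᶜ, ∃ b ∈ E ∩ (g '' Icc 0 1)ᶜ,
      connectedComponentIn (g '' Icc 0 1)ᶜ a ≠ connectedComponentIn (g '' Icc 0 1)ᶜ b := by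
  obtain ⟨τ, hτ⟩ := exists_between hg.pos
  have hτ₁ : τ < 1 := by linarith [hτ.2, hg.lt_half]
  have hcA : ContinuousOn g (Icc 0 τ) := hg.continuousOn.mono (Icc_subset_Icc_right hτ₁.le)
  have hcB : ContinuousOn g (Icc τ 1) := hg.continuousOn.mono (Icc_subset_Icc_left hτ.1.le)
  have hjoinA : JoinedIn (g '' Icc 0 τ) (g 0) (g τ) :=
    (((convex_Icc 0 τ).isPathConnected (nonempty_Icc.2 hτ.1.le)).image' hcA).joinedIn
      _ ⟨0, by simp [hτ.1.le], rfl⟩ _ ⟨τ, by simp [hτ.1.le], rfl⟩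
  have hjoinB : JoinedIn (g '' Icc τ 1) (g 0) (g τ) :=
    (((convex_Icc τ 1).isPathConnected (nonempty_Icc.2 hτ₁.le)).image' hcB).joinedIn
      _ ⟨1, by simp [hτ₁.le], hg.map_zero_eq_map_one.symm⟩ _ ⟨τ, by simp [hτ₁.le], rfl⟩
  have hunion : g '' Icc 0 1 = g '' Icc 0 τ ∪ g '' Icc τ 1 := by
    rw [← image_union, Icc_union_Icc_eq_Icc hτ.1.le hτ₁.le]
  have hnot := fun W : Set ℂ => not_sdiff_union_subset_of_isPreconnected (W := W)
    (isCompact_Icc.image_of_continuousOn hcA).isClosed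
    (isCompact_Icc.image_of_continuousOn hcB).isClosed (hg.image_inter_image_subset hτ)
    (hg.map_ne ⟨le_rfl, hg.pos⟩ ⟨hτ.1, hτ₁⟩ hτ.1.ne) hjoinA hjoinB hE
  rw [← hunion] at hnot
  obtain ⟨a, ha⟩ : (E ∩ (g '' Icc 0 1)ᶜ).Nonempty :=
    nonempty_iff_ne_empty.2 fun h => hnot ∅ isPreconnected_empty (empty_subset _) h.subset
  by_contra! hsame
  refine hnot _ isPreconnected_connectedComponentIn
    (connectedComponentIn_subset (g '' Icc 0 1)ᶜ a) fun z hz => ?_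
  exact hsame a ha z hz ▸ mem_connectedComponentIn hz.2

theorem IsLoopInjectiveNearBase.isTwoSidedAt (hg : IsLoopInjectiveNearBase g δ) :
    IsTwoSidedAt (g '' Icc 0 1)ᶜ (g 0) where
  exists_not_injective := by
    have hmid : IsClosed (g '' Icc δ (1 - δ)) := (isCompact_Icc.image_of_continuousOn
      (hg.continuousOn.mono (Icc_subset_Icc hg.pos.le (by linarith [hg.pos])))).isClosed
    have hbase : g 0 ∉ g '' Icc δ (1 - δ) := fun ⟨t, ht, h⟩ =>
      hg.map_ne ⟨le_rfl, hg.pos⟩ ⟨hg.pos.trans_le ht.1, by linarith [ht.2, hg.pos]⟩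
        (hg.pos.trans_le ht.1).ne h.symm
    obtain ⟨r, hr, hball⟩ := nhds_basis_ball.mem_iff.1 (hmid.isOpen_compl.mem_nhds hbase)
    refine ⟨ball (g 0) r ∩ (g '' Icc 0 1)ᶜ, Filter.inter_mem
      (mem_nhdsWithin_of_mem_nhds (ball_mem_nhds _ hr)) self_mem_nhdsWithin, fun a ha => ?_⟩
    exact
      hg.not_injective_connectedComponentIn (isPathConnected_ball hr)
        (fun t ht hgt => hball hgt (mem_image_of_mem g ht)) (fun i => (ha i).1) fun i => (ha i).2
  exists_ne E' hE' := by
    obtain ⟨E, hE, hEE'⟩ := mem_nhdsWithin_iff_exists_mem_nhds_inter.1 hE'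
    obtain ⟨a, ha, b, hb, hab⟩ := hg.exists_connectedComponentIn_ne hE
    exact ⟨a, hEE' ha, b, hEE' hb, hab⟩

end PlaneLoops

section SphereLoops

theorem IsLoopInjectiveNearBase.isTwoSidedAt_of_isEmbedding {X : Type*} [TopologicalSpace X]
    {g : ℝ → X} {δ : ℝ} (hg : IsLoopInjectiveNearBase g δ) {ψ : ℂ → X}
    (hψ : Topology.IsEmbedding ψ) (hgψ : MapsTo g (Icc 0 1) (range ψ)) :
    IsTwoSidedAt (range ψ \ g '' Icc 0 1) (g 0) := by
  choose! γ hγ using hgψ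
  have himage : g '' Icc 0 1 = ψ '' (γ '' Icc 0 1) := by
    rw [image_image]
    exact (image_congr hγ).symm
  rw [himage, ← image_compl_eq_range_sdiff_image hψ.injective, ← hγ (left_mem_Icc.2 zero_le_one),
    isTwoSidedAt_image_iff hψ]
  exact (hg.of_comp_isEmbedding hψ hγ).isTwoSidedAt

variable {E : Type*} [NormedAddCommGroup E] [InnerProductSpace ℝ E]
  [Fact (Module.finrank ℝ E = 2 + 1)]

theorem exists_isEmbedding_range_eq_sphere_sdiff_singleton {v : E} (hv : v ∈ sphere (0 : E) 1) :
    ∃ ψ : ℂ → E, Topology.IsEmbedding ψ ∧ range ψ = sphere 0 1 \ {v} := by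
  let e := (stereographic' 2 (⟨v, hv⟩ : sphere (0 : E) 1)).symm
  have he : Topology.IsOpenEmbedding e := e.isOpenEmbedding (stereographic'_target _)
  have hrange : range e = {⟨v, hv⟩}ᶜ := by
    rw [← image_univ, ← stereographic'_target (n := 2) (⟨v, hv⟩ : sphere (0 : E) 1),
      ← stereographic'_source (n := 2)]
    exact e.image_source_eq_target
  let i := Complex.orthonormalBasisOneI.repr.toHomeomorph
  refine ⟨Subtype.val ∘ e ∘ i, .comp .subtypeVal (he.isEmbedding.comp i.isEmbedding), ?_⟩
  rw [range_comp, i.surjective.range_comp, hrange, image_compl_eq_range_sdiff_image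
    Subtype.val_injective, Subtype.range_coe, image_singleton]

variable {g : ℝ → E} {δ : ℝ}

theorem IsLoopInjectiveNearBase.exists_mem_sphere_notMem_image (hg : IsLoopInjectiveNearBase g δ)
    (hgS : MapsTo g (Icc 0 1) (sphere 0 1)) : ∃ n ∈ sphere (0 : E) 1, n ∉ g '' Icc 0 1 := by
  obtain ⟨τ, hτ⟩ := exists_between hg.pos
  have hτ₁ : τ < 1 := by linarith [hτ.2, hg.lt_half]
  obtain ⟨ψ, hψ, hψr⟩ := exists_isEmbedding_range_eq_sphere_sdiff_singleton
    (hgS ⟨hτ.1.le, hτ₁.le⟩)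
  obtain ⟨w, hw⟩ : g 0 ∈ range ψ := hψr ▸
    ⟨hgS (by simp), hg.map_ne ⟨le_rfl, hg.pos⟩ ⟨hτ.1, hτ₁⟩ hτ.1.ne⟩
  have himage : ψ '' {w}ᶜ = sphere 0 1 \ {g 0, g τ} := by
    rw [image_compl_eq_range_sdiff_image hψ.injective, hψr, image_singleton, hw, sdiff_sdiff,
      singleton_union, pair_comm]
  have hpre : IsPreconnected (sphere 0 1 \ {g 0, g τ}) := himage ▸
    ((isConnected_compl_singleton_of_one_lt_rank one_lt_rank_real_complex w).isPreconnected.image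
      ψ hψ.continuous.continuousOn)
  have hclosed : ∀ a b, 0 ≤ a → b ≤ 1 → IsClosed (g '' Icc a b) := fun a b ha hb =>
    (isCompact_Icc.image_of_continuousOn (hg.continuousOn.mono (Icc_subset_Icc ha hb))).isClosed
  have hmem : ∀ t ∈ Ioo (0 : ℝ) 1, t ≠ τ → g t ∈ sphere 0 1 \ {g 0, g τ} := fun t ht htτ =>
    ⟨hgS (Ioo_subset_Icc_self ht), fun h => h.elim
      (fun h₀ => hg.map_ne ⟨le_rfl, hg.pos⟩ ht ht.1.ne h₀.symm)
      fun hτs => hg.map_ne ⟨hτ.1.le, hτ.2⟩ ht htτ.symm hτs.symm⟩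
  obtain ⟨s, hs⟩ := exists_between hτ.1
  obtain ⟨t, ht⟩ := exists_between hτ₁
  by_contra! hsurj
  have hcover : sphere 0 1 \ {g 0, g τ} ⊆ g '' Icc 0 τ ∪ g '' Icc τ 1 := by
    rw [← image_union, Icc_union_Icc_eq_Icc hτ.1.le hτ₁.le]
    exact sdiff_subset.trans hsurj
  obtain ⟨x, hx, hxAB⟩ := isPreconnected_closed_iff.1 hpre _ _ (hclosed 0 τ le_rfl hτ₁.le)
    (hclosed τ 1 hτ.1.le le_rfl) hcover
    ⟨g s, hmem s ⟨hs.1, hs.2.trans hτ₁⟩ hs.2.ne, s, ⟨hs.1.le, hs.2.le⟩, rfl⟩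
    ⟨g t, hmem t ⟨hτ.1.trans ht.1, ht.2⟩ ht.1.ne', t, ⟨ht.1.le, ht.2.le⟩, rfl⟩
  exact hx.2 (hg.image_inter_image_subset hτ hxAB)

theorem IsLoopInjectiveNearBase.isTwoSidedAt_sphere (hg : IsLoopInjectiveNearBase g δ)
    (hgS : MapsTo g (Icc 0 1) (sphere 0 1)) :
    IsTwoSidedAt (sphere 0 1 \ g '' Icc 0 1) (g 0) := by
  set K := g '' Icc 0 1
  obtain ⟨n, hnS, hnK⟩ := hg.exists_mem_sphere_notMem_image hgS
  obtain ⟨ψ, hψ, hψr⟩ := exists_isEmbedding_range_eq_sphere_sdiff_singleton hnS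
  have hpunctured : IsTwoSidedAt ((sphere 0 1 \ K) \ {n}) (g 0) := by
    rw [sdiff_sdiff_comm, ← hψr]
    exact hg.isTwoSidedAt_of_isEmbedding hψ fun t ht => hψr ▸
      ⟨hgS ht, fun h => hnK (h ▸ mem_image_of_mem g ht)⟩
  obtain ⟨τ, hτ⟩ := exists_between hg.pos
  have hτ₁ : τ < 1 := by linarith [hτ.2, hg.lt_half]
  have hτI : τ ∈ Icc (0 : ℝ) 1 := ⟨hτ.1.le, hτ₁.le⟩
  obtain ⟨φ, hφ, hφr⟩ := exists_isEmbedding_range_eq_sphere_sdiff_singleton (hgS hτI)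
  obtain ⟨w, hw⟩ : g 0 ∈ range φ := hφr ▸
    ⟨hgS (by simp), hg.map_ne ⟨le_rfl, hg.pos⟩ ⟨hτ.1, hτ₁⟩ hτ.1.ne⟩
  obtain ⟨z, rfl⟩ : n ∈ range φ := hφr ▸ ⟨hnS, fun h => hnK (h ▸ mem_image_of_mem g hτI)⟩
  have hwz : w ≠ z := fun h => hnK ⟨0, by simp, h ▸ hw.symm⟩
  have hK : IsClosed K := (isCompact_Icc.image_of_continuousOn hg.continuousOn).isClosed
  have himage : φ '' (φ ⁻¹' Kᶜ) = sphere 0 1 \ K := by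
    rw [image_preimage_eq_inter_range, hφr, inter_comm, ← sdiff_eq, sdiff_sdiff, singleton_union,
      insert_eq_of_mem (mem_image_of_mem g hτI)]
  rw [← himage, ← image_singleton, ← image_sdiff hφ.injective, ← hw, isTwoSidedAt_image_iff hφ,
    isTwoSidedAt_sdiff_singleton_iff one_lt_rank_real_complex
      (hK.isOpen_compl.preimage hφ.continuous) hwz] at hpunctured
  rwa [← himage, ← hw, isTwoSidedAt_image_iff hφ]

end SphereLoops

/-- The parametrization `t ↦ q · exp (2πit)` of the circle through `q`, for `q` in the Euclidean
plane identified with `ℂ`. -/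
def circleParam (q : EuclideanSpace ℝ (Fin 2)) (t : ℝ) : EuclideanSpace ℝ (Fin 2) :=
  Complex.orthonormalBasisOneI.repr
    (Complex.orthonormalBasisOneI.repr.symm q * Complex.exp (t * (2 * Real.pi * Complex.I)))

section CircleParametrization

variable {q : EuclideanSpace ℝ (Fin 2)}

theorem continuous_circleParam (q : EuclideanSpace ℝ (Fin 2)) : Continuous (circleParam q) := by
  unfold circleParam
  fun_prop

theorem circleParam_zero (q : EuclideanSpace ℝ (Fin 2)) : circleParam q 0 = q := by
  simp only [circleParam, Complex.ofReal_zero, zero_mul, Complex.exp_zero, mul_one,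
    LinearIsometryEquiv.apply_symm_apply]

theorem circleParam_eq_circleParam_iff (hq : q ≠ 0) {s t : ℝ} :
    circleParam q s = circleParam q t ↔ ∃ k : ℤ, s = t + k := by
  have hq' : Complex.orthonormalBasisOneI.repr.symm q ≠ 0 :=
    (map_ne_zero_iff _ (LinearIsometryEquiv.injective _)).2 hq
  rw [circleParam, circleParam, LinearIsometryEquiv.map_eq_iff, mul_right_inj' hq',
    Complex.exp_eq_exp_iff_exists_int]
  refine exists_congr fun k => ?_
  rw [← add_mul, mul_left_inj' Complex.two_pi_I_ne_zero]
  norm_cast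

theorem periodic_circleParam (hq : q ≠ 0) : Function.Periodic (circleParam q) 1 := fun t =>
  (circleParam_eq_circleParam_iff hq).2 ⟨1, by simp⟩

theorem eq_or_mem_pair_of_circleParam_eq (hq : q ≠ 0) {s t : ℝ} (hs : s ∈ Icc (0 : ℝ) 1)
    (ht : t ∈ Icc (0 : ℝ) 1) (hst : circleParam q s = circleParam q t) :
    s = t ∨ (s ∈ ({0, 1} : Set ℝ) ∧ t ∈ ({0, 1} : Set ℝ)) := by
  obtain ⟨k, rfl⟩ := (circleParam_eq_circleParam_iff hq).1 hst
  have hk₁ : (k : ℝ) ≤ 1 := by linarith [hs.2, ht.1]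
  have hk₂ : (-1 : ℝ) ≤ k := by linarith [hs.1, ht.2]
  have hk : k = -1 ∨ k = 0 ∨ k = 1 := by
    have h₁ : k ≤ 1 := by exact_mod_cast hk₁
    have h₂ : -1 ≤ k := by exact_mod_cast hk₂
    lia
  rcases hk with rfl | rfl | rfl <;> push_cast at hs ⊢
  · obtain rfl : t = 1 := by linarith [hs.1, ht.2]
    simp
  · simp
  · obtain rfl : t = 0 := by linarith [hs.2, ht.1]
    simp

theorem image_circleParam_Icc (hq : q ∈ circleS) : circleParam q '' Icc 0 1 = circleS := by
  have hq₁ : ‖q‖ = 1 := mem_sphere_zero_iff_norm.1 hq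
  have hq₀ : q ≠ 0 := norm_ne_zero_iff.1 (hq₁ ▸ one_ne_zero)
  have hrange : range (circleParam q) = circleS := by
    refine subset_antisymm (range_subset_iff.2 fun t => ?_) fun x hx => ?_
    · have hexp : ‖Complex.exp (t * (2 * Real.pi * Complex.I))‖ = 1 := by
        simpa [mul_assoc] using Complex.norm_exp_ofReal_mul_I (t * (2 * Real.pi))
      refine mem_sphere_zero_iff_norm.2 ?_
      rw [circleParam, LinearIsometryEquiv.norm_map, norm_mul, LinearIsometryEquiv.norm_map, hq₁,
        hexp, one_mul]
    · set i := Complex.orthonormalBasisOneI.repr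
      have hiq : i.symm q ≠ 0 := by simpa using hq₀
      have hnorm : ‖i.symm x / i.symm q‖ = 1 := by
        simp [hq₁, mem_sphere_zero_iff_norm.1 hx]
      obtain ⟨θ, hθ⟩ := (Complex.norm_eq_one_iff _).1 hnorm
      refine ⟨θ / (2 * Real.pi), ?_⟩
      have hangle : ((θ / (2 * Real.pi) : ℝ) : ℂ) * (2 * Real.pi * Complex.I) = θ * Complex.I := by
        have := Real.pi_ne_zero
        push_cast
        field_simp
      rw [circleParam, hangle, hθ, mul_div_cancel₀ _ hiq]
      exact i.apply_symm_apply x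
  simpa [hrange] using (periodic_circleParam hq₀).image_Icc one_pos 0

theorem exists_isLoopInjectiveNearBase_comp_circleParam
    {f : EuclideanSpace ℝ (Fin 2) → EuclideanSpace ℝ (Fin 3)} (hf : ContinuousOn f circleS)
    (hq : q ∈ circleS) (hinj : injPts f ∈ 𝓝[circleS] q) :
    ∃ δ, IsLoopInjectiveNearBase (f ∘ circleParam q) δ := by
  have hq₀ : q ≠ 0 := fun h => by simp [circleS, h] at hq
  have hmaps : MapsTo (circleParam q) (Icc 0 1) circleS :=
    mapsTo_iff_image_subset.2 (image_circleParam_Icc hq).subset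
  have hmem : ∀ t, circleParam q t ∈ circleS := fun t => by
    obtain ⟨s, hs, hst⟩ := (periodic_circleParam hq₀).exists_mem_Ico₀ one_pos t
    exact hst ▸ hmaps (Ico_subset_Icc_self hs)
  have htendsto : Filter.Tendsto (circleParam q) (𝓝 0) (𝓝[circleS] q) :=
    tendsto_nhdsWithin_of_tendsto_nhds_of_eventually_within _
      ((continuous_circleParam q).tendsto' 0 q (circleParam_zero q)) (.of_forall hmem)
  obtain ⟨ε, hε, hball⟩ := Metric.mem_nhds_iff.1 (htendsto hinj)
  let δ := min ε (1 / 4)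
  have hnear : ∀ t ∈ Icc (0 : ℝ) 1, t ∉ Icc δ (1 - δ) → circleParam q t ∈ injPts f := by
    intro t ht htδ
    rcases lt_or_ge t δ with hlt | hge
    · exact hball (by simpa [abs_of_nonneg ht.1] using hlt.trans_le (min_le_left _ _))
    · have htδ' : 1 - t < ε := by
        linarith [not_le.1 fun h => htδ ⟨hge, h⟩, min_le_left ε (1 / 4)]
      rw [← (periodic_circleParam hq₀).sub_eq t]
      exact hball (by simpa [abs_sub_comm t 1, abs_of_nonneg (sub_nonneg.2 ht.2)] using htδ')
  refine ⟨δ, hf.comp (continuous_circleParam q).continuousOn hmaps, ?_, lt_min hε (by norm_num),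
    (min_le_right _ _).trans_lt (by norm_num), fun s hs t ht hst => ?_⟩
  · exact congrArg f (by simpa using (periodic_circleParam hq₀ 0).symm)
  · by_cases hmid : s ∈ Icc δ (1 - δ) ∧ t ∈ Icc δ (1 - δ)
    · exact .inr (.inr hmid)
    · have heq : circleParam q s = circleParam q t := by
        rcases not_and_or.1 hmid with hs' | ht'
        · exact ((hnear s hs hs').2 _ (hmem t) hst.symm).symm
        · exact (hnear t ht ht').2 _ (hmem s) hst
      exact (eq_or_mem_pair_of_circleParam_eq hq₀ hs ht heq).imp_right .inl

end CircleParametrization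

/-- **Strong Jordan separation, two-component part.**  If the set of injective points of a
continuous `f : S¹ → S²` contains a nonempty relatively open set `U` and `q ∈ U`, then there
are precisely two connected components of `S² \ f(S¹)` containing `p = f q` in their closure. -/
theorem strong_jordan_separation_two_components
    (f : EuclideanSpace ℝ (Fin 2) → EuclideanSpace ℝ (Fin 3))
    (hf : ContinuousOn f circleS) (hmaps : MapsTo f circleS sphereS)
    (U : Set (EuclideanSpace ℝ (Fin 2))) (hUne : U.Nonempty) (hUI : U ⊆ injPts f)
    (hUopen : ∃ V, IsOpen V ∧ U = V ∩ circleS)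
    (q : EuclideanSpace ℝ (Fin 2)) (hq : q ∈ U) :
    ∃ C₁ C₂ : Set (EuclideanSpace ℝ (Fin 3)), C₁ ≠ C₂ ∧
      IsCompOf C₁ (sphereS \ f '' circleS) ∧ f q ∈ closure C₁ ∧
      IsCompOf C₂ (sphereS \ f '' circleS) ∧ f q ∈ closure C₂ ∧
      ∀ C : Set (EuclideanSpace ℝ (Fin 3)),
        IsCompOf C (sphereS \ f '' circleS) → f q ∈ closure C → C = C₁ ∨ C = C₂ := by
  have hqS : q ∈ circleS := (hUI hq).1
  have hinj : injPts f ∈ 𝓝[circleS] q := by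
    obtain ⟨V, hV, rfl⟩ := hUopen
    exact Filter.mem_of_superset (inter_comm V _ ▸ inter_mem_nhdsWithin _ (hV.mem_nhds hq.1)) hUI
  obtain ⟨δ, hδ⟩ := exists_isLoopInjectiveNearBase_comp_circleParam hf hqS hinj
  have : Fact (Module.finrank ℝ (EuclideanSpace ℝ (Fin 3)) = 2 + 1) := ⟨finrank_euclideanSpace_fin⟩
  have himage : f ∘ circleParam q '' Icc 0 1 = f '' circleS := by
    rw [image_comp, image_circleParam_Icc hqS]
  have htwo : IsTwoSidedAt (sphereS \ f '' circleS) (f q) := by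
    have hloop := hδ.isTwoSidedAt_sphere fun t ht =>
      hmaps (image_circleParam_Icc hqS ▸ mem_image_of_mem _ ht)
    rwa [himage, Function.comp_apply, circleParam_zero] at hloop
  obtain ⟨a, ha, b, hb, hab, hpa, hpb, huniq⟩ := htwo.exists_two_components
  refine ⟨_, _, hab, ⟨a, ha, rfl⟩, hpa, ⟨b, hb, rfl⟩, hpb, ?_⟩
  rintro _ ⟨c, hc, rfl⟩ hpc
  exact huniq c hc hpc
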